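/- arXiv:2407.21420 — 2 statements merged into one kernel-verified Lean document; each statement's English description precedes it below -/
import Mathlib

section
/- Let x^(1), …, x^(n) be rational points of X(2,2)₊ such that the pairs (x₁^(i), x₂^(i)) are pairwise distinct, and let y^(1), …, y^(n) be rational numbers. Then there exist complex numbers a_2, a_3, …, a_{n+1}, each having rational real and imaginary parts, such that the function f_n(x) = ∑_{ℓ=2}^{n+1} a_ℓ (x₁ + i x₂)^{−ℓ} satisfies f_n(x^(i)) = y^(i) for every 1 ≤ i ≤ n. -/
/-!
In the variable `w = (x₁ + i x₂)⁻¹` the function `f_n` is `w ^ 2` times an arbitrary polynomial of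
degree `< n`. Dividing the prescribed values by `w ^ 2` leaves polynomial interpolation at distinct
nodes, whose Vandermonde system is solvable over any field containing the nodes and the values, here
`ℚ(i)`.
-/

open Function

/-- The subfield `F(i) = F + iF` of `ℂ`, for a subfield `F` of `ℝ`, encoded as the set of complex
numbers with real and imaginary parts in `F`. -/
noncomputable def adjoinI (F : Subfield ℝ) : Subfield ℂ where
  carrier := {z | z.re ∈ F ∧ z.im ∈ F}
  zero_mem' := ⟨F.zero_mem, F.zero_mem⟩
  one_mem' := ⟨F.one_mem, F.zero_mem⟩
  add_mem' hz hw := ⟨F.add_mem hz.1 hw.1, F.add_mem hz.2 hw.2⟩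
  neg_mem' hz := ⟨F.neg_mem hz.1, F.neg_mem hz.2⟩
  mul_mem' {z w} hz hw := by
    rw [Set.mem_ofPred_eq, Complex.mul_re, Complex.mul_im]
    exact ⟨F.sub_mem (F.mul_mem hz.1 hw.1) (F.mul_mem hz.2 hw.2),
      F.add_mem (F.mul_mem hz.1 hw.2) (F.mul_mem hz.2 hw.1)⟩
  inv_mem' z hz := by
    have hnorm : Complex.normSq z ∈ F :=
      F.add_mem (F.mul_mem hz.1 hz.1) (F.mul_mem hz.2 hz.2)
    rw [Set.mem_ofPred_eq, Complex.inv_re, Complex.inv_im]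
    exact ⟨F.div_mem hz.1 hnorm, F.div_mem (F.neg_mem hz.2) hnorm⟩

/-- The field `ℚ(i)` of Gaussian rationals, as a subfield of `ℂ`. -/
noncomputable def gaussianRationals : Subfield ℂ :=
  adjoinI (Rat.castHom ℝ).fieldRange

theorem mk_mem_gaussianRationals {a b : ℝ} (ha : ∃ p : ℚ, a = p) (hb : ∃ q : ℚ, b = q) :
    (⟨a, b⟩ : ℂ) ∈ gaussianRationals :=
  ⟨ha.imp fun _ h ↦ h.symm, hb.imp fun _ h ↦ h.symm⟩

theorem exists_eq_add_mul_I_of_mem_gaussianRationals {z : ℂ} (hz : z ∈ gaussianRationals) :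
    ∃ p q : ℚ, z = (p : ℂ) + (q : ℂ) * Complex.I := by
  obtain ⟨⟨p, hp⟩, ⟨q, hq⟩⟩ := hz
  exact ⟨p, q, Complex.ext (by simpa using hp.symm) (by simpa using hq.symm)⟩

theorem ofReal_add_I_mul_ofReal (a b : ℝ) : (a : ℂ) + Complex.I * (b : ℂ) = ⟨a, b⟩ := by
  rw [Complex.mk_eq_add_mul_I, mul_comm]

theorem mk_ne_zero_of_sq_add_sq_sub_sq_sub_sq_eq_one {a b c d : ℝ}
    (h : a ^ 2 + b ^ 2 - c ^ 2 - d ^ 2 = 1) : (⟨a, b⟩ : ℂ) ≠ 0 := by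
  intro hab
  obtain ⟨rfl, rfl⟩ : a = 0 ∧ b = 0 := Complex.ext_iff.1 hab
  linarith [sq_nonneg c, sq_nonneg d]

section Interpolation

variable {K : Type*} [Field K] {n : ℕ}

theorem exists_sum_mul_pow_eq {w : Fin n → K} (hw : Injective w) (v : Fin n → K) :
    ∃ a : Fin n → K, ∀ i, ∑ m : Fin n, a m * w i ^ (m : ℕ) = v i := by
  have hunit : IsUnit (Matrix.vandermonde w) :=
    (Matrix.isUnit_iff_isUnit_det _).2 (Matrix.det_vandermonde_ne_zero_iff.2 hw).isUnit
  obtain ⟨a, ha⟩ := Matrix.mulVec_surjective_iff_isUnit.2 hunit v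
  refine ⟨a, fun i ↦ ?_⟩
  simpa only [Matrix.mulVec, dotProduct, Matrix.vandermonde_apply, mul_comm] using congrFun ha i

theorem exists_sum_mul_zpow_neg_sub_eq {z : Fin n → K} (hz : Injective z) (hz₀ : ∀ i, z i ≠ 0)
    (k : ℤ) (y : Fin n → K) :
    ∃ a : Fin n → K, ∀ i, ∑ m : Fin n, a m * z i ^ (-(m.val : ℤ) - k) = y i := by
  obtain ⟨a, ha⟩ := exists_sum_mul_pow_eq (inv_injective.comp hz) fun i ↦ y i * z i ^ k
  refine ⟨a, fun i ↦ ?_⟩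
  calc
    ∑ m : Fin n, a m * z i ^ (-(m.val : ℤ) - k)
      = (∑ m : Fin n, a m * (z i)⁻¹ ^ (m : ℕ)) / z i ^ k := by
        simp only [Finset.sum_div, zpow_sub₀ (hz₀ i), zpow_neg, zpow_natCast, inv_pow,
          mul_div_assoc]
    _ = y i * z i ^ k / z i ^ k := congrArg (· / z i ^ k) (ha i)
    _ = y i := mul_div_cancel_right₀ _ (zpow_ne_zero k (hz₀ i))

theorem stmt_13_general (F : Subfield K) {z : Fin n → K} (hzF : ∀ i, z i ∈ F)
    (hz : Injective z) (hz₀ : ∀ i, z i ≠ 0) (k : ℤ) {y : Fin n → K} (hyF : ∀ i, y i ∈ F) :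
    ∃ a : Fin n → K, (∀ m, a m ∈ F) ∧
      ∀ i, ∑ m : Fin n, a m * z i ^ (-(m.val : ℤ) - k) = y i := by
  lift z to Fin n → F using hzF
  lift y to Fin n → F using hyF
  obtain ⟨a, ha⟩ := exists_sum_mul_zpow_neg_sub_eq (z := z)
    (fun i j hij ↦ hz (congrArg Subtype.val hij)) (fun i h ↦ hz₀ i (congrArg Subtype.val h)) k y
  exact ⟨fun m ↦ a m, fun m ↦ (a m).2, fun i ↦ by
    simpa only [map_sum, map_mul, map_zpow₀, Subfield.subtype_apply]
      using congrArg F.subtype (ha i)⟩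

end Interpolation

/-- Rational Whitney interpolation on `X(2,2)₊`: for rational points of `X(2,2)₊`
with pairwise distinct first two coordinate pairs and rational values `y i`,
there are Gaussian-rational coefficients `a_2, …, a_{n+1}` such that
`f_n(x) = ∑_{ℓ=2}^{n+1} a_ℓ (x₁ + i x₂)^(-ℓ)` interpolates the data exactly. -/
theorem stmt_13 (n : ℕ) (x : Fin n → Fin 4 → ℝ)
    (hX : ∀ i, (x i 0) ^ 2 + (x i 1) ^ 2 - (x i 2) ^ 2 - (x i 3) ^ 2 = 1)
    (hrat : ∀ i j, ∃ q : ℚ, x i j = (q : ℝ))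
    (hdist : ∀ i j, i ≠ j → (x i 0, x i 1) ≠ (x j 0, x j 1))
    (y : Fin n → ℚ) :
    ∃ a : Fin n → ℂ,
      (∀ m, ∃ qr qi : ℚ, a m = (qr : ℂ) + (qi : ℂ) * Complex.I) ∧
      ∀ i, ∑ m : Fin n,
        a m * (((x i 0 : ℝ) : ℂ) + Complex.I * ((x i 1 : ℝ) : ℂ)) ^ (-(m.val : ℤ) - 2)
          = (y i : ℂ) := by
  simp only [ofReal_add_I_mul_ofReal]
  have hinj : Injective fun i ↦ (⟨x i 0, x i 1⟩ : ℂ) :=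
    Complex.equivRealProd.symm.injective.comp fun i j ↦ not_imp_not.1 (hdist i j)
  obtain ⟨a, ha, hsum⟩ := stmt_13_general gaussianRationals
    (fun i ↦ mk_mem_gaussianRationals (hrat i 0) (hrat i 1)) hinj
    (fun i ↦ mk_ne_zero_of_sq_add_sq_sub_sq_sub_sq_eq_one (hX i)) 2
    (fun i ↦ SubfieldClass.ratCast_mem gaussianRationals (y i))
  exact ⟨a, fun m ↦ exists_eq_add_mul_I_of_mem_gaussianRationals (ha m), hsum⟩
end

section
/- Let x^(1), …, x^(n) be pairwise distinct points of X(2,2)₊ and let y_1, …, y_n be complex numbers. Then there exist an infinitely differentiable function t : ℝ⁴ → ℝ and complex numbers a_2, a_3, …, a_{n+1} such that the function F(x) = ∑_{ℓ=2}^{n+1} a_ℓ ( e^{i t(x)} (x₁ + i x₂) )^{−ℓ} satisfies F(x^(i)) = y_i exactly, for every 1 ≤ i ≤ n. -/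
/-!
The only obstruction to interpolating by negative powers of `z = x₁ + i x₂` is that distinct points
of the quadric may share the same `z`. Since `z` never vanishes on the quadric, the phases can be
chosen so that the values `e^{i t(x)} z` have pairwise distinct arguments. These phases are
interpolated by a polynomial in a linear form that is injective on the given points, and the
coefficients solve a Vandermonde system in the inverses of the rotated values.
-/

open Complex Function

section SmoothInterpolation

variable {ι 𝕜 E : Type*} [Finite ι]

theorem exists_strongDual_injective_comp [Field 𝕜] [Infinite 𝕜] [TopologicalSpace 𝕜]
    [IsTopologicalRing 𝕜] [AddCommGroup E] [TopologicalSpace E] [Module 𝕜 E] [SeparatingDual 𝕜 E]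
    {x : ι → E} (hx : Injective x) : ∃ f : StrongDual 𝕜 E, Injective (f ∘ x) := by
  let evalSub (p : {p : ι × ι // p.1 ≠ p.2}) : Module.Dual 𝕜 (StrongDual 𝕜 E) :=
    (ContinuousLinearMap.coeLM 𝕜).flip (x p.1.1 - x p.1.2)
  obtain ⟨f, hf⟩ := Module.Dual.exists_forall_ne_zero_of_forall_exists evalSub fun p ↦
    SeparatingDual.exists_ne_zero (sub_ne_zero.2 (hx.ne p.2))
  have hne {i j : ι} (hij : i ≠ j) : f (x i - x j) ≠ 0 := hf ⟨(i, j), hij⟩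
  refine ⟨f, fun i j hij ↦ by_contra fun h ↦ hne h ?_⟩
  rw [map_sub, sub_eq_zero]
  exact hij

theorem exists_contDiff_forall_apply_eq [NontriviallyNormedField 𝕜] [NormedAddCommGroup E]
    [NormedSpace 𝕜 E] [SeparatingDual 𝕜 E] {N : WithTop ℕ∞} {x : ι → E} (hx : Injective x)
    (y : ι → 𝕜) : ∃ t : E → 𝕜, ContDiff 𝕜 N t ∧ ∀ i, t (x i) = y i := by
  obtain ⟨f, hf⟩ := exists_strongDual_injective_comp (𝕜 := 𝕜) hx
  obtain ⟨q, hq⟩ := (Polynomial.exists_eval_eq_iff (f ∘ x) y).2 fun i j hij ↦ congrArg y (hf hij)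
  exact ⟨fun p ↦ q.eval (f p), (q.contDiff_aeval N).comp f.contDiff, hq⟩

end SmoothInterpolation

theorem exists_forall_sum_mul_zpow_neg_sub_eq {K : Type*} [Field K] {n : ℕ} {w : Fin n → K}
    (hw : Injective w) (hw₀ : ∀ i, w i ≠ 0) (k : ℤ) (y : Fin n → K) :
    ∃ a : Fin n → K, ∀ i, ∑ m : Fin n, a m * w i ^ (-(m.val : ℤ) - k) = y i := by
  have hdet : (Matrix.vandermonde fun i ↦ (w i)⁻¹).det ≠ 0 :=
    Matrix.det_vandermonde_ne_zero_iff.2 (inv_injective.comp hw)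
  obtain ⟨a, ha⟩ := Matrix.mulVec_surjective_iff_isUnit.2
    ((Matrix.isUnit_iff_isUnit_det _).2 hdet.isUnit) fun i ↦ y i * w i ^ k
  refine ⟨a, fun i ↦ ?_⟩
  calc ∑ m : Fin n, a m * w i ^ (-(m.val : ℤ) - k)
      = (∑ m : Fin n, (w i)⁻¹ ^ m.val * a m) * (w i ^ k)⁻¹ := by
        rw [Finset.sum_mul]
        refine Finset.sum_congr rfl fun m _ ↦ ?_
        rw [zpow_sub₀ (hw₀ i), zpow_neg, zpow_natCast, inv_pow]
        ring
    _ = y i * w i ^ k * (w i ^ k)⁻¹ := congrArg (· * (w i ^ k)⁻¹) (congrFun ha i)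
    _ = y i := mul_inv_cancel_right₀ (zpow_ne_zero k (hw₀ i)) (y i)

theorem arg_exp_I_mul_sub_arg_mul {z : ℂ} (hz : z ≠ 0) {φ : ℝ}
    (hφ : φ ∈ Set.Ioc (-Real.pi) Real.pi) : arg (exp (I * (φ - arg z : ℝ)) * z) = φ := by
  have hpolar : exp (I * (φ - arg z : ℝ)) * z = ‖z‖ * exp (φ * I) := by
    nth_rewrite 2 [← norm_mul_exp_arg_mul_I z]
    rw [mul_left_comm, ← exp_add]
    congr 2
    push_cast
    ring
  rw [hpolar, exp_mul_I]
  exact arg_mul_cos_add_sin_mul_I (norm_pos_iff.2 hz) hφ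

theorem exists_injective_exp_I_mul_mul {ι : Type*} [Countable ι] {z : ι → ℂ} (hz : ∀ i, z i ≠ 0) :
    ∃ θ : ι → ℝ, Injective fun i ↦ exp (I * θ i) * z i := by
  have : Infinite (Set.Ioc (-Real.pi) Real.pi) :=
    (Set.Ioc_infinite (neg_lt_self Real.pi_pos)).to_subtype
  obtain ⟨e, he⟩ := exists_injective_nat ι
  let φ (i : ι) : Set.Ioc (-Real.pi) Real.pi := Infinite.natEmbedding _ (e i)
  have hφ : Injective φ := (Infinite.natEmbedding _).injective.comp he
  refine ⟨fun i ↦ φ i - arg (z i), Injective.of_comp (f := arg) ?_⟩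
  have harg : (arg ∘ fun i ↦ exp (I * (φ i - arg (z i) : ℝ)) * z i) = Subtype.val ∘ φ :=
    funext fun i ↦ arg_exp_I_mul_sub_arg_mul (hz i) (φ i).2
  rw [harg]
  exact Subtype.val_injective.comp hφ

theorem stmt_17_general {E : Type*} [NormedAddCommGroup E] [NormedSpace ℝ E] {N : WithTop ℕ∞}
    {n : ℕ} {x : Fin n → E} (hx : Injective x) {z : Fin n → ℂ} (hz : ∀ i, z i ≠ 0) (k : ℤ)
    (y : Fin n → ℂ) :
    ∃ (t : E → ℝ) (a : Fin n → ℂ), ContDiff ℝ N t ∧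
      ∀ i, ∑ m : Fin n, a m * (exp (I * t (x i)) * z i) ^ (-(m.val : ℤ) - k) = y i := by
  obtain ⟨θ, hθ⟩ := exists_injective_exp_I_mul_mul hz
  obtain ⟨t, ht, htθ⟩ := exists_contDiff_forall_apply_eq hx θ
  obtain ⟨a, ha⟩ := exists_forall_sum_mul_zpow_neg_sub_eq hθ
    (fun i ↦ mul_ne_zero (exp_ne_zero _) (hz i)) k y
  exact ⟨t, a, ht, fun i ↦ by rw [htθ, ha]⟩

theorem ofReal_add_I_mul_ofReal_ne_zero {u v : ℝ} (h : 0 < u ^ 2 + v ^ 2) :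
    (u : ℂ) + I * v ≠ 0 := by
  rw [mul_comm, ← normSq_pos, normSq_add_mul_I]
  exact h

/-- Exact Whitney extension on `X(2,2)₊` via a smooth phase: for pairwise distinct
points `x⁽¹⁾, …, x⁽ⁿ⁾` of `X(2,2)₊` and complex values `y i`, there exist an
infinitely differentiable function `t : ℝ⁴ → ℝ` and coefficients
`a_2, …, a_{n+1}` such that `F(x) = ∑_{ℓ=2}^{n+1} a_ℓ (e^{i t(x)} (x₁ + i x₂))^(-ℓ)`
satisfies `F(x⁽ⁱ⁾) = y i` exactly for all `i`. -/
theorem stmt_17 (n : ℕ) (x : Fin n → Fin 4 → ℝ)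
    (hX : ∀ i, (x i 0) ^ 2 + (x i 1) ^ 2 - (x i 2) ^ 2 - (x i 3) ^ 2 = 1)
    (hdist : Function.Injective x) (y : Fin n → ℂ) :
    ∃ (t : (Fin 4 → ℝ) → ℝ) (a : Fin n → ℂ),
      ContDiff ℝ (⊤ : ℕ∞) t ∧
      ∀ i, ∑ m : Fin n,
        a m * (Complex.exp (Complex.I * (t (x i) : ℂ)) *
          (((x i 0 : ℝ) : ℂ) + Complex.I * ((x i 1 : ℝ) : ℂ))) ^ (-(m.val : ℤ) - 2)
        = y i :=
  stmt_17_general hdist (fun i ↦ ofReal_add_I_mul_ofReal_ne_zero <| by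
    linarith [hX i, sq_nonneg (x i 2), sq_nonneg (x i 3)]) 2 y
end
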